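/- For every real x with 0 < x ≤ 1, Σ_{n=1}^∞ (2n choose n) x^{2n} / (4ⁿ (2n+1)²) = log(2x)·arcsin(x)/x + (1/(4 i x)) · (Li₂(e^{2 i arcsin(x)}) − Li₂(e^{−2 i arcsin(x)})) − 1 (as complex numbers; both sides are in fact real). -/

import Mathlib

/-- The complex polylogarithm `Li_s(z) = Σ_{n≥1} zⁿ/n^s`. -/
noncomputable def cLi (s : ℕ) (z : ℂ) : ℂ := ∑' n : ℕ, z ^ (n + 1) / ((n : ℂ) + 1) ^ s

/-!
Put `S(x) = Σ_{n≥0} (2n choose n) / 4ⁿ · x^(2n+1) / (2n+1)²`. Termwise differentiation of the Taylor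
series of `arcsin` gives `S'(x) = arcsin x / x`, so `θ ↦ S(sin θ)` has derivative `θ cot θ` on
`(0, π/2)`. So does `θ ↦ θ log(2 sin θ) + Cl₂(2θ) / 2`, because `Cl₂'(θ) = -log|2 sin(θ/2)|`. Both
functions are continuous on `[0, π/2]` and vanish at `0`, hence agree there, and
`Li₂(exp(iθ)) - Li₂(exp(-iθ)) = 2i Cl₂(θ)` turns this into the claim.

The derivative of `Cl₂` is a statement on the boundary of the disc of convergence of `Li₂`. It holds
because `Li₂'(z) = -log(1 - z) / z` extends continuously to the closed disc away from `1`, and a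
function continuous on the closure of a convex open set whose derivative inside has a limit at a
boundary point is differentiable there, relative to the closure.
-/

open Filter Topology Set Metric ComplexConjugate

theorem eqOn_Icc_of_hasDerivAt_eq {E : Type*} [NormedAddCommGroup E] [NormedSpace ℝ E]
    {f g f' : ℝ → E} {a b : ℝ} (hab : a < b) (hf : ContinuousOn f (Icc a b))
    (hg : ContinuousOn g (Icc a b)) (hf' : ∀ x ∈ Ioo a b, HasDerivAt f (f' x) x)
    (hg' : ∀ x ∈ Ioo a b, HasDerivAt g (f' x) x) (ha : f a = g a) : EqOn f g (Icc a b) := by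
  have hd : ∀ x ∈ Ioo a b, HasDerivAt (f - g) 0 x := fun x hx ↦ by
    simpa using (hf' x hx).sub (hg' x hx)
  obtain ⟨c, hc⟩ := isOpen_Ioo.exists_is_const_of_deriv_eq_zero isPreconnected_Ioo
    (fun x hx ↦ (hd x hx).differentiableAt.differentiableWithinAt) (fun x hx ↦ (hd x hx).deriv)
  have hconst : EqOn (f - g) (fun _ ↦ c) (Icc a b) :=
    EqOn.of_subset_closure hc (hf.sub hg) continuousOn_const Ioo_subset_Icc_self
      (closure_Ioo hab.ne).ge
  have hc0 : c = 0 := by simpa [ha] using (hconst (left_mem_Icc.2 hab.le)).symm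
  exact fun x hx ↦ sub_eq_zero.1 ((hconst hx).trans hc0)

theorem hasDerivWithinAt_closure_of_tendsto_deriv {E : Type*} [NormedAddCommGroup E]
    [NormedSpace ℂ E] {f : ℂ → E} {f' : E} {s : Set ℂ} {z : ℂ} (hf : DiffContOnCl ℂ f s)
    (hconv : Convex ℝ s) (hopen : IsOpen s) (hlim : Tendsto (deriv f) (𝓝[s] z) (𝓝 f')) :
    HasDerivWithinAt f f' (closure s) z := by
  let toRealLinear (e : E) : ℂ →L[ℝ] E :=
    (ContinuousLinearMap.toSpanSingleton ℂ e).restrictScalars ℝ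
  have hcont : Continuous toRealLinear :=
    (ContinuousLinearMap.restrictScalarsL ℂ ℂ E ℝ ℝ).continuous.comp
      (ContinuousLinearMap.toSpanSingletonLIE ℂ E).continuous
  have hfderiv : Tendsto (fderiv ℝ f) (𝓝[s] z) (𝓝 (toRealLinear f')) := by
    refine ((hcont.tendsto f').comp hlim).congr' ?_
    filter_upwards [self_mem_nhdsWithin] with w hw
    have hw' : HasDerivAt f (deriv f w) w := (hf.differentiableAt hopen hw).hasDerivAt
    exact (hw'.hasFDerivAt.restrictScalars ℝ).fderiv.symm
  exact (hasFDerivWithinAt_closure_of_tendsto_fderiv (hf.differentiableOn.restrictScalars ℝ) hconv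
    hopen (fun y hy ↦ (hf.continuousOn y hy).mono subset_closure) hfderiv).of_restrictScalars ℝ rfl

section LacunaryPolylog

variable {𝕜 : Type*} [RCLike 𝕜]

/-- The polylogarithm `∑ aₙ z^(kₙ+1) / (kₙ+1)^s` with coefficients `aₙ` and exponents `kₙ + 1`.
It is a common generalization of `cLi` (`aₙ = 1`, `kₙ = n`) and `arcsinSeries`
(`aₙ = (2n choose n) / 4ⁿ`, `kₙ = 2n`). -/
noncomputable def lacunaryPolylog (a : ℕ → 𝕜) (k : ℕ → ℕ) (s : ℕ) (z : 𝕜) : 𝕜 :=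
  ∑' n, a n * (z ^ (k n + 1) / ((k n : 𝕜) + 1) ^ s)

variable {a : ℕ → 𝕜} {C : ℝ} {k : ℕ → ℕ} {s : ℕ} {z : 𝕜}

theorem norm_natCast_add_one (m : ℕ) : ‖(m : 𝕜) + 1‖ = m + 1 := by
  exact_mod_cast RCLike.norm_natCast (K := 𝕜) (m + 1)

theorem norm_lacunaryPolylog_term_le (ha : ∀ n, ‖a n‖ ≤ C) (hz : ‖z‖ ≤ 1) (n : ℕ) :
    ‖a n * (z ^ (k n + 1) / ((k n : 𝕜) + 1) ^ s)‖ ≤ C * (1 / ((k n : ℝ) + 1) ^ s) := by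
  rw [norm_mul, norm_div, norm_pow, norm_pow, norm_natCast_add_one]
  have hC : 0 ≤ C := (norm_nonneg _).trans (ha n)
  gcongr
  exacts [ha n, pow_le_one₀ (norm_nonneg z) hz]

theorem summable_one_div_comp_add_one_pow (hk : k.Injective) (hs : 2 ≤ s) :
    Summable fun n ↦ 1 / ((k n : ℝ) + 1) ^ s := by
  simpa [Function.comp_def] using (Real.summable_one_div_nat_pow.2 hs).comp_injective
    ((add_left_injective 1).comp hk)

theorem summable_lacunaryPolylog (ha : ∀ n, ‖a n‖ ≤ C) (hk : k.Injective) (hs : 2 ≤ s)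
    (hz : ‖z‖ ≤ 1) : Summable fun n ↦ a n * (z ^ (k n + 1) / ((k n : 𝕜) + 1) ^ s) :=
  .of_norm_bounded ((summable_one_div_comp_add_one_pow hk hs).mul_left C)
    (norm_lacunaryPolylog_term_le ha hz)

theorem continuousOn_lacunaryPolylog (ha : ∀ n, ‖a n‖ ≤ C) (hk : k.Injective) (hs : 2 ≤ s) :
    ContinuousOn (lacunaryPolylog a k s) (closedBall 0 1) :=
  continuousOn_tsum (fun _ ↦ by fun_prop) ((summable_one_div_comp_add_one_pow hk hs).mul_left C)
    fun n _ hz ↦ norm_lacunaryPolylog_term_le ha (mem_closedBall_zero_iff.1 hz) n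

theorem hasDerivAt_lacunaryPolylog_term (a : 𝕜) (m s : ℕ) (z : 𝕜) :
    HasDerivAt (fun w ↦ a * (w ^ (m + 1) / ((m : 𝕜) + 1) ^ (s + 1)))
      (a * (z ^ m / ((m : 𝕜) + 1) ^ s)) z := by
  have hm : (m : 𝕜) + 1 ≠ 0 := m.cast_add_one_ne_zero
  refine (((hasDerivAt_pow (m + 1) z).div_const _).const_mul a).congr_deriv ?_
  push_cast [add_tsub_cancel_right, pow_succ]
  field_simp

theorem hasDerivAt_lacunaryPolylog_succ (ha : ∀ n, ‖a n‖ ≤ C) (hk : k.Injective) (s : ℕ)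
    (hz : ‖z‖ < 1) :
    HasDerivAt (lacunaryPolylog a k (s + 1)) (∑' n, a n * (z ^ k n / ((k n : 𝕜) + 1) ^ s)) z := by
  obtain ⟨r, hzr, hr⟩ := exists_between hz
  have hr0 : 0 ≤ r := (norm_nonneg z).trans hzr.le
  have hsummable : Summable fun n ↦ C * r ^ k n :=
    ((summable_geometric_of_lt_one hr0 hr).comp_injective hk).mul_left C
  refine hasDerivAt_tsum_of_isPreconnected hsummable isOpen_ball
    (convex_ball (0 : 𝕜) r).isPreconnected (fun n y _ ↦ hasDerivAt_lacunaryPolylog_term ..)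
    (fun n y hy ↦ ?_) (mem_ball_self ((norm_nonneg z).trans_lt hzr)) (by simp)
    (mem_ball_zero_iff.2 hzr)
  rw [norm_mul, norm_div, norm_pow, norm_pow, norm_natCast_add_one]
  have hC : 0 ≤ C := (norm_nonneg _).trans (ha n)
  have hden : 1 ≤ ((k n : ℝ) + 1) ^ s := one_le_pow₀ (by simp)
  calc ‖a n‖ * (‖y‖ ^ k n / ((k n : ℝ) + 1) ^ s) ≤ ‖a n‖ * ‖y‖ ^ k n := by
        gcongr; exact div_le_self (by positivity) hden
    _ ≤ C * r ^ k n := by gcongr; exacts [ha n, (mem_ball_zero_iff.1 hy).le]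

theorem hasDerivAt_lacunaryPolylog_succ_of_ne_zero (ha : ∀ n, ‖a n‖ ≤ C) (hk : k.Injective)
    (s : ℕ) (hz : ‖z‖ < 1) (hz0 : z ≠ 0) :
    HasDerivAt (lacunaryPolylog a k (s + 1)) (lacunaryPolylog a k s z / z) z := by
  convert hasDerivAt_lacunaryPolylog_succ ha hk s hz using 1
  rw [lacunaryPolylog, ← tsum_div_const]
  congr! 2 with n
  rw [pow_succ]
  field_simp

end LacunaryPolylog

section Polylog

variable {s : ℕ} {z : ℂ}

theorem cLi_eq_lacunaryPolylog (s : ℕ) : cLi s = lacunaryPolylog (fun _ ↦ 1) id s := by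
  ext z
  simp [cLi, lacunaryPolylog]

theorem cLi_one_of_norm_lt_one (hz : ‖z‖ < 1) : cLi 1 z = -Complex.log (1 - z) := by
  simpa [cLi] using (Complex.hasSum_taylorSeries_neg_log' hz).tsum_eq

theorem cLi_conj (s : ℕ) (z : ℂ) : cLi s (conj z) = conj (cLi s z) := by
  simp [cLi, Complex.conj_tsum]

theorem continuousOn_cLi (hs : 2 ≤ s) : ContinuousOn (cLi s) (closedBall 0 1) := by
  rw [cLi_eq_lacunaryPolylog]
  exact continuousOn_lacunaryPolylog (fun _ ↦ norm_one.le) Function.injective_id hs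

theorem hasDerivAt_cLi_succ (s : ℕ) (hz : ‖z‖ < 1) (hz0 : z ≠ 0) :
    HasDerivAt (cLi (s + 1)) (cLi s z / z) z := by
  simp only [cLi_eq_lacunaryPolylog]
  exact hasDerivAt_lacunaryPolylog_succ_of_ne_zero (fun _ ↦ norm_one.le) Function.injective_id s
    hz hz0

theorem one_sub_mem_slitPlane (hz : ‖z‖ ≤ 1) (hz1 : z ≠ 1) : 1 - z ∈ Complex.slitPlane := by
  by_contra! h
  simp only [Complex.mem_slitPlane_iff, not_or, not_lt, not_not, Complex.sub_re, Complex.sub_im,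
    Complex.one_re, Complex.one_im, zero_sub, neg_eq_zero] at h
  have hre : z.re = 1 := by linarith [Complex.re_le_norm z]
  exact hz1 (Complex.ext hre h.2)

theorem diffContOnCl_cLi (hs : 2 ≤ s) : DiffContOnCl ℂ (cLi s) (ball 0 1) := by
  refine ⟨fun z hz ↦ ?_, closure_ball (0 : ℂ) one_ne_zero ▸ continuousOn_cLi hs⟩
  obtain ⟨t, rfl⟩ := Nat.exists_eq_add_of_le' (one_le_two.trans hs)
  rw [cLi_eq_lacunaryPolylog]
  exact (hasDerivAt_lacunaryPolylog_succ (fun _ ↦ norm_one.le) Function.injective_id t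
    (mem_ball_zero_iff.1 hz)).differentiableAt.differentiableWithinAt

theorem hasDerivWithinAt_cLi_two (hz : ‖z‖ ≤ 1) (hz0 : z ≠ 0) (hz1 : z ≠ 1) :
    HasDerivWithinAt (cLi 2) (-Complex.log (1 - z) / z) (closedBall 0 1) z := by
  have hlim : Tendsto (fun w ↦ -Complex.log (1 - w) / w) (𝓝[ball 0 1] z)
      (𝓝 (-Complex.log (1 - z) / z)) := by
    have : ContinuousAt (fun w ↦ -Complex.log (1 - w) / w) z := by
      fun_prop (disch := first | assumption | exact one_sub_mem_slitPlane hz hz1)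
    exact this.tendsto.mono_left nhdsWithin_le_nhds
  have hderiv : (fun w ↦ -Complex.log (1 - w) / w) =ᶠ[𝓝[ball 0 1] z] deriv (cLi 2) := by
    filter_upwards [self_mem_nhdsWithin, nhdsWithin_le_nhds (isOpen_ne.mem_nhds hz0)] with w hw hw0
    rw [mem_ball_zero_iff] at hw
    rw [(hasDerivAt_cLi_succ 1 hw hw0).deriv, cLi_one_of_norm_lt_one hw]
  rw [← closure_ball (0 : ℂ) one_ne_zero]
  exact hasDerivWithinAt_closure_of_tendsto_deriv (diffContOnCl_cLi le_rfl) (convex_ball 0 1)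
    isOpen_ball (hlim.congr' hderiv)

end Polylog

section Clausen

open Complex (I)

variable {θ : ℝ}

/-- The Clausen function `Cl₂(θ) = Σ_{n≥1} sin(nθ)/n²`, encoded as the imaginary part of the
dilogarithm on the unit circle. -/
noncomputable def clausen (θ : ℝ) : ℝ := (cLi 2 (Complex.exp (θ * I))).im

theorem cLi_two_exp_sub_cLi_two_exp_neg (θ : ℝ) :
    cLi 2 (Complex.exp (θ * I)) - cLi 2 (Complex.exp (-θ * I)) = 2 * I * clausen θ := by
  have hconj : Complex.exp (-θ * I) = conj (Complex.exp (θ * I)) := by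
    simp [← Complex.exp_conj]
  rw [hconj, cLi_conj, Complex.sub_conj, clausen]
  push_cast
  ring

@[simp]
theorem clausen_zero : clausen 0 = 0 := by
  simpa using (cLi_two_exp_sub_cLi_two_exp_neg 0).symm

theorem continuous_clausen : Continuous clausen :=
  Complex.continuous_im.comp <| (continuousOn_cLi le_rfl).comp_continuous (by fun_prop)
    fun θ ↦ by simp [Complex.norm_exp_ofReal_mul_I]

theorem norm_one_sub_exp_ofReal_mul_I (θ : ℝ) :
    ‖1 - Complex.exp (θ * I)‖ = |2 * Real.sin (θ / 2)| := by
  rw [norm_sub_rev, mul_comm, Complex.norm_exp_I_mul_ofReal_sub_one, Real.norm_eq_abs]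

theorem hasDerivAt_clausen (hθ : Real.sin (θ / 2) ≠ 0) :
    HasDerivAt clausen (-Real.log |2 * Real.sin (θ / 2)|) θ := by
  have hnorm : ∀ t : ℝ, ‖Complex.exp (t * I)‖ = 1 := Complex.norm_exp_ofReal_mul_I
  have hne : Complex.exp (θ * I) ≠ 1 := fun h ↦ hθ <| by
    simpa [h] using norm_one_sub_exp_ofReal_mul_I θ
  have hexp : HasDerivAt (fun t : ℝ ↦ Complex.exp (t * I)) (Complex.exp (θ * I) * I) θ := by
    simpa using ((hasDerivAt_id (θ : ℂ)).mul_const I).cexp.comp_ofReal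
  have hLi := (hasDerivWithinAt_cLi_two (hnorm θ).le (Complex.exp_ne_zero _) hne).scomp_hasDerivAt
    θ hexp fun t ↦ mem_closedBall_zero_iff.2 (hnorm t).le
  refine (Complex.imCLM.hasFDerivAt.comp_hasDerivAt θ hLi).congr_deriv ?_
  have hcancel : Complex.exp (θ * I) * I * (-Complex.log (1 - Complex.exp (θ * I)) /
      Complex.exp (θ * I)) = -(I * Complex.log (1 - Complex.exp (θ * I))) := by
    field_simp [Complex.exp_ne_zero]
  rw [smul_eq_mul, hcancel, ← norm_one_sub_exp_ofReal_mul_I, ← Complex.log_re]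
  simp

end Clausen

section ArcsinSeries

variable {x : ℝ}

theorem multichoose_one_half {K : Type*} [Field K] [CharZero K] (n : ℕ) :
    Ring.multichoose (1 / 2 : K) n = n.centralBinom / 4 ^ n := by
  suffices h : (ascPochhammer ℕ n).smeval (1 / 2 : K) = n.factorial * (n.centralBinom / 4 ^ n) by
    rw [← Ring.factorial_nsmul_multichoose_eq_ascPochhammer, nsmul_eq_mul] at h
    exact mul_left_cancel₀ (by exact_mod_cast n.factorial_ne_zero) h
  induction n with
  | zero => simp
  | succ n ih =>
    have hcentral : ((n : K) + 1) * (n + 1).centralBinom = 2 * (2 * n + 1) * n.centralBinom := by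
      exact_mod_cast n.succ_mul_centralBinom_succ
    have hstep : (ascPochhammer ℕ (n + 1)).smeval (1 / 2 : K) =
        (ascPochhammer ℕ n).smeval (1 / 2 : K) * (1 / 2 + n) := by
      simp [ascPochhammer_succ_right, Polynomial.smeval_mul, Polynomial.smeval_natCast,
        Polynomial.smeval_add]
    rw [hstep, ih, Nat.factorial_succ, pow_succ]
    push_cast
    field_simp
    linear_combination -2 * (n.factorial : K) * hcentral

theorem hasSum_centralBinom_mul_pow_two_mul (hx : |x| < 1) :
    HasSum (fun n : ℕ ↦ (n.centralBinom : ℝ) / 4 ^ n * x ^ (2 * n)) (1 / √(1 - x ^ 2)) := by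
  have hmem : x ^ 2 ∈ eball (0 : ℝ) 1 := by
    rw [← ENNReal.ofReal_one, eball_ofReal]
    simpa using hx
  have := (Real.one_div_one_sub_rpow_hasFPowerSeriesOnBall_zero (1 / 2)).hasSum hmem
  simpa only [FormalMultilinearSeries.ofScalars_apply_eq, ← Ring.multichoose_eq,
    multichoose_one_half, ← Real.sqrt_eq_rpow, smul_eq_mul, zero_add, ← pow_mul] using this

theorem norm_centralBinom_div_four_pow_le_one (n : ℕ) :
    ‖(n.centralBinom : ℝ) / 4 ^ n‖ ≤ 1 := by
  rw [Real.norm_of_nonneg (by positivity), div_le_one (by positivity)]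
  exact_mod_cast n.centralBinom_le_four_pow

/-- The series `∑ (2n choose n) / 4ⁿ · x^(2n+1) / (2n+1)^s`. For `s = 1` it is the Taylor
series of `arcsin`. -/
noncomputable def arcsinSeries (s : ℕ) (x : ℝ) : ℝ :=
  lacunaryPolylog (fun n ↦ (n.centralBinom : ℝ) / 4 ^ n) (2 * ·) s x

theorem arcsinSeries_zero (s : ℕ) : arcsinSeries s 0 = 0 := by
  simp [arcsinSeries, lacunaryPolylog]

theorem continuousOn_arcsinSeries {s : ℕ} (hs : 2 ≤ s) :
    ContinuousOn (arcsinSeries s) (closedBall 0 1) :=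
  continuousOn_lacunaryPolylog norm_centralBinom_div_four_pow_le_one
    (mul_right_injective₀ two_ne_zero) hs

theorem hasDerivAt_arcsinSeries_one (hx : |x| < 1) :
    HasDerivAt (arcsinSeries 1) (1 / √(1 - x ^ 2)) x := by
  rw [← (hasSum_centralBinom_mul_pow_two_mul hx).tsum_eq]
  simpa only [pow_zero, div_one] using! hasDerivAt_lacunaryPolylog_succ
    norm_centralBinom_div_four_pow_le_one (mul_right_injective₀ two_ne_zero) 0 hx

theorem arcsinSeries_one_eq_arcsin (hx : |x| < 1) : arcsinSeries 1 x = Real.arcsin x := by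
  have hseries : ∀ y ∈ Ioo (-1 : ℝ) 1, HasDerivAt (arcsinSeries 1) (1 / √(1 - y ^ 2)) y :=
    fun y hy ↦ hasDerivAt_arcsinSeries_one (abs_lt.2 hy)
  have harcsin : ∀ y ∈ Ioo (-1 : ℝ) 1, HasDerivAt Real.arcsin (1 / √(1 - y ^ 2)) y :=
    fun y hy ↦ Real.hasDerivAt_arcsin hy.1.ne' hy.2.ne
  exact isOpen_Ioo.eqOn_of_deriv_eq isPreconnected_Ioo
    (fun y hy ↦ (hseries y hy).differentiableAt.differentiableWithinAt)
    (fun y hy ↦ (harcsin y hy).differentiableAt.differentiableWithinAt)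
    (fun y hy ↦ (hseries y hy).deriv.trans (harcsin y hy).deriv.symm)
    (x := 0) (by simp) (by simp [arcsinSeries_zero]) (abs_lt.1 hx)

theorem hasDerivAt_arcsinSeries_two (hx : |x| < 1) (hx0 : x ≠ 0) :
    HasDerivAt (arcsinSeries 2) (Real.arcsin x / x) x := by
  rw [← arcsinSeries_one_eq_arcsin hx]
  exact hasDerivAt_lacunaryPolylog_succ_of_ne_zero norm_centralBinom_div_four_pow_le_one
    (mul_right_injective₀ two_ne_zero) 1 hx hx0

end ArcsinSeries

section ArcsinSubstitution

open Real

variable {x θ : ℝ}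

theorem sinc_pos (hθ : θ ∈ Ioo (-π) π) : 0 < sinc θ := by
  obtain rfl | hθ0 := eq_or_ne θ 0
  · simp
  · rw [sinc_of_ne_zero hθ0]
    obtain hneg | hpos := hθ0.lt_or_gt
    · exact div_pos_of_neg_of_neg (sin_neg_of_neg_of_neg_pi_lt hneg hθ.1) hneg
    · exact div_pos (sin_pos_of_pos_of_lt_pi hpos hθ.2) hpos

theorem continuousOn_mul_log_two_mul_sin :
    ContinuousOn (fun θ ↦ θ * log (2 * sin θ)) (Ioo (-π) π) := by
  -- Factoring `sin θ = θ sinc θ` isolates the singularity at `0` in the continuous `θ log θ`.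
  have h : ContinuousOn (fun θ ↦ θ * log θ + θ * log (2 * sinc θ)) (Ioo (-π) π) := by
    refine continuous_mul_log.continuousOn.add (continuousOn_id.mul (.log ?_ fun θ hθ ↦ ?_))
    · exact (continuous_sinc.const_mul 2).continuousOn
    · exact (mul_pos two_pos (sinc_pos hθ)).ne'
  refine h.congr fun θ hθ ↦ ?_
  obtain rfl | hθ0 := eq_or_ne θ 0
  · simp
  · have := sinc_pos hθ
    simp only [← mul_add]
    rw [← log_mul hθ0 (by positivity), sinc_of_ne_zero hθ0]
    field_simp

theorem hasDerivAt_mul_log_two_mul_sin_add_clausen (hθ : sin θ ≠ 0) :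
    HasDerivAt (fun t ↦ t * log (2 * sin t) + clausen (2 * t) / 2) (θ / sin θ * cos θ) θ := by
  have hhalf : 2 * θ / 2 = θ := mul_div_cancel_left₀ θ two_ne_zero
  have hlog : HasDerivAt (fun t ↦ log (2 * sin t)) (2 * cos θ / (2 * sin θ)) θ :=
    ((hasDerivAt_sin θ).const_mul 2).log (mul_ne_zero two_ne_zero hθ)
  have hclausen : HasDerivAt (fun t ↦ clausen (2 * t)) (-log (2 * sin θ) * 2) θ := by
    have := (hasDerivAt_clausen (θ := 2 * θ) (by rwa [hhalf])).comp θ (hasDerivAt_const_mul 2)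
    rwa [hhalf, log_abs] at this
  refine (((hasDerivAt_id θ).mul hlog).add (hclausen.div_const 2)).congr_deriv ?_
  simp only [id]
  field_simp
  ring

theorem arcsinSeries_two_sin (hθ : θ ∈ Icc 0 (π / 2)) :
    arcsinSeries 2 (sin θ) = θ * log (2 * sin θ) + clausen (2 * θ) / 2 := by
  have hsin : ∀ t ∈ Ioo 0 (π / 2), 0 < sin t := fun t ht ↦
    sin_pos_of_pos_of_lt_pi ht.1 (by linarith [ht.2, pi_pos])
  refine eqOn_Icc_of_hasDerivAt_eq (f := fun t ↦ arcsinSeries 2 (sin t))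
    (g := fun t ↦ t * log (2 * sin t) + clausen (2 * t) / 2)
    (f' := fun t ↦ t / sin t * cos t) pi_div_two_pos ?_ ?_ (fun t ht ↦ ?_) (fun t ht ↦ ?_) ?_ hθ
  · exact (continuousOn_arcsinSeries le_rfl).comp continuous_sin.continuousOn fun t _ ↦ by
      simpa using abs_sin_le_one t
  · refine (continuousOn_mul_log_two_mul_sin.mono ?_).add ?_
    · exact Icc_subset_Ioo (by linarith [pi_pos]) (by linarith [pi_pos])
    · exact ((continuous_clausen.comp (continuous_const_mul 2)).div_const 2).continuousOn
  · have hcos : 0 < cos t := cos_pos_of_mem_Ioo ⟨by linarith [ht.1, pi_pos], ht.2⟩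
    have habs : |sin t| < 1 := by
      rw [← sq_lt_one_iff_abs_lt_one]
      nlinarith [sin_sq_add_cos_sq t]
    have := (hasDerivAt_arcsinSeries_two habs (hsin t ht).ne').comp t (hasDerivAt_sin t)
    rwa [arcsin_sin (by linarith [ht.1, pi_pos]) ht.2.le] at this
  · exact hasDerivAt_mul_log_two_mul_sin_add_clausen (hsin t ht).ne'
  · simp [arcsinSeries_zero]

theorem tsum_centralBinom_succ_eq_arcsinSeries {s : ℕ} (hs : 2 ≤ s) (hx : |x| ≤ 1) (hx0 : x ≠ 0) :
    ∑' n : ℕ, (Nat.centralBinom (n + 1) : ℝ) * x ^ (2 * (n + 1))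
        / (4 ^ (n + 1) * ((2 * (n + 1) + 1 : ℝ)) ^ s) = arcsinSeries s x / x - 1 := by
  have hsum := (summable_lacunaryPolylog norm_centralBinom_div_four_pow_le_one
    (mul_right_injective₀ two_ne_zero) hs (z := x) hx).div_const x
  rw [arcsinSeries, lacunaryPolylog, ← tsum_div_const, hsum.tsum_eq_zero_add]
  have hzero : (Nat.centralBinom 0 : ℝ) / 4 ^ 0 *
      (x ^ (2 * 0 + 1) / ((2 * 0 : ℕ) + 1) ^ s) / x = 1 := by
    simp [hx0]
  rw [hzero, add_sub_cancel_left]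
  congr! 2 with n
  push_cast [pow_succ x (2 * (n + 1))]
  field_simp

end ArcsinSubstitution

/-- For `0 < x ≤ 1`,
`Σ_{n≥1} (2n choose n) x^{2n}/(4ⁿ(2n+1)²)
  = log(2x)·arcsin(x)/x + (1/(4ix))(Li₂(e^{2i arcsin x}) − Li₂(e^{−2i arcsin x})) − 1`
as complex numbers. -/
theorem centralBinom_gf_sq (x : ℝ) (hx : 0 < x) (hx1 : x ≤ 1) :
    ((∑' n : ℕ, (Nat.centralBinom (n + 1) : ℝ) * x ^ (2 * (n + 1))
        / (4 ^ (n + 1) * ((2 * (n + 1) + 1 : ℝ)) ^ 2) : ℝ) : ℂ) =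
      ((Real.log (2 * x) * Real.arcsin x / x : ℝ) : ℂ) +
        1 / (4 * Complex.I * (x : ℂ)) *
          (cLi 2 (Complex.exp (2 * Complex.I * ((Real.arcsin x : ℝ) : ℂ))) -
            cLi 2 (Complex.exp (-2 * Complex.I * ((Real.arcsin x : ℝ) : ℂ)))) - 1 := by
  have hx0 : (x : ℂ) ≠ 0 := mod_cast hx.ne'
  have hseries := arcsinSeries_two_sin
    ⟨Real.arcsin_nonneg.2 hx.le, Real.arcsin_le_pi_div_two x⟩
  rw [Real.sin_arcsin (by linarith) hx1] at hseries
  have hLi := cLi_two_exp_sub_cLi_two_exp_neg (2 * Real.arcsin x)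
  rw [tsum_centralBinom_succ_eq_arcsinSeries le_rfl (abs_le.2 ⟨by linarith, hx1⟩) hx.ne', hseries]
  have harg : ((2 * Real.arcsin x : ℝ) : ℂ) * Complex.I = 2 * Complex.I * Real.arcsin x := by
    push_cast; ring
  rw [neg_mul, harg, ← neg_mul, ← neg_mul] at hLi
  rw [hLi]
  push_cast
  field_simp [Complex.I_ne_zero]
  ring
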